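/- Let n ≥ 1 and let a ∈ ℂⁿ be the autocorrelation of some signal x₀ ∈ ℂⁿ. Then there exists a finite set S ⊆ ℂⁿ with |S| ≤ 2ⁿ such that every signal x ∈ ℂⁿ whose autocorrelation equals a is equivalent (up to time-shift, conjugate-flip and global phase) to some element of S. -/

import Mathlib

/-- Extension of a signal `x ∈ ℂⁿ` by zero to all of `ℤ`. -/
noncomputable def extZ {n : ℕ} (x : Fin n → ℂ) (i : ℤ) : ℂ :=
  if h : 0 ≤ i ∧ i < (n : ℤ) then x ⟨i.toNat, by omega⟩ else 0

/-- The autocorrelation of a signal `x ∈ ℂⁿ`: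
`a_m = Σ_{j=0}^{n−1−m} x_j conj(x_{j+m})`. -/
noncomputable def autocorr {n : ℕ} (x : Fin n → ℂ) (m : ℕ) : ℂ :=
  ∑ j ∈ Finset.range (n - m), extZ x (j : ℤ) * (starRingEnd ℂ) (extZ x ((j : ℤ) + (m : ℤ)))

/-- Two signals `x, x′ ∈ ℂⁿ` are equivalent up to time-shift, conjugate-flip and global
phase: there are `c ∈ ℂ` with `|c| = 1` and `m ∈ ℤ` such that, extending by zero,
either `x′_j = c x_{j−m}` for all `j`, or `x′_j = c conj(x_{m−j})` for all `j`. -/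
def equivSig {n : ℕ} (x x' : Fin n → ℂ) : Prop :=
  ∃ (c : ℂ) (m : ℤ), ‖c‖ = 1 ∧
    ((∀ j : ℤ, extZ x' j = c * extZ x (j - m)) ∨
     (∀ j : ℤ, extZ x' j = c * (starRingEnd ℂ) (extZ x (m - j))))

/-!
The autocorrelation of `x` lists the coefficients of `p * p⋆`, where `p` is the polynomial with
coefficients `x` and `p⋆` is obtained from it by conjugating and reversing the coefficients. The
nonzero roots of `p⋆` are the reflections in the unit circle of those of `p`, so the
autocorrelation determines the nonzero roots of `p` up to the choice of one point in each of at
most `n` pairs `{r, 1 / conj r}`. The nonzero roots in turn determine `p` up to a power of `X` (a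
time-shift) and a constant factor, whose modulus is fixed by the energy `a₀`.
-/

open Polynomial

theorem exists_add_eq_and_add_map_eq {α : Type*} {σ : α → α} (hσ : Function.Involutive σ)
    {Q R : Multiset α} (h : Q + Q.map σ = R + R.map σ) :
    ∃ A B, A + B = R ∧ A + B.map σ = Q := by
  induction R using Multiset.induction_on generalizing Q with
  | empty => exact ⟨0, 0, by simp_all⟩
  | cons r R ih =>
    have hr : r ∈ Q ∨ σ r ∈ Q := by
      have : r ∈ Q + Q.map σ := by simp [h]
      rcases Multiset.mem_add.1 this with hr | hr
      · exact .inl hr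
      · obtain ⟨s, hs, rfl⟩ := Multiset.mem_map.1 hr
        exact .inr (by rwa [hσ s])
    rcases hr with hr | hr
    · obtain ⟨Q, rfl⟩ := Multiset.exists_cons_of_mem hr
      obtain ⟨A, B, rfl, rfl⟩ := ih (Q := Q) (by simpa using h)
      exact ⟨r ::ₘ A, B, by simp⟩
    · obtain ⟨Q, rfl⟩ := Multiset.exists_cons_of_mem hr
      obtain ⟨A, B, rfl, rfl⟩ := ih (Q := Q) (by simpa [hσ r, Multiset.cons_swap r] using h)
      exact ⟨A, r ::ₘ B, by simp⟩

section NonzeroRoots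

variable {R K : Type*} [CommRing R] [IsDomain R] [DecidableEq R] [Field K] [DecidableEq K]

/-- The multiset of nonzero roots of a polynomial, counted with multiplicity. -/
noncomputable def nonzeroRoots (p : R[X]) : Multiset R :=
  p.roots.filter (· ≠ 0)

theorem nonzeroRoots_mul {p q : R[X]} (h : p * q ≠ 0) :
    nonzeroRoots (p * q) = nonzeroRoots p + nonzeroRoots q := by
  simp [nonzeroRoots, roots_mul h]

theorem nonzeroRoots_X_pow_mul (k : ℕ) (p : R[X]) :
    nonzeroRoots (X ^ k * p) = nonzeroRoots p := by
  rcases eq_or_ne p 0 with rfl | hp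
  · simp
  · have hX : nonzeroRoots (X ^ k : R[X]) = 0 := by
      refine Multiset.filter_eq_nil.2 fun r hr => ?_
      rw [roots_X_pow] at hr
      simpa using Multiset.mem_of_mem_nsmul hr
    rw [nonzeroRoots_mul (by simp [hp]), hX, zero_add]

theorem card_nonzeroRoots_le_natDegree (p : R[X]) : (nonzeroRoots p).card ≤ p.natDegree :=
  (Multiset.card_le_card (Multiset.filter_le _ _)).trans p.card_roots'

theorem nonzeroRoots_map {S : Type*} [CommRing S] [IsDomain S] [DecidableEq S] {f : R →+* S}
    (hf : Function.Injective f) {p : R[X]} (hp : p.Splits) :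
    nonzeroRoots (p.map f) = (nonzeroRoots p).map f := by
  simp only [nonzeroRoots, hp.roots_map_of_injective hf, Multiset.filter_map, Function.comp_def,
    ne_eq, map_eq_zero_iff f hf]

theorem nonzeroRoots_reverse_X_sub_C (r : K) :
    nonzeroRoots (X - C r).reverse = (nonzeroRoots (X - C r)).map (·⁻¹) := by
  have h : (X - C r).reverse = C (-r) * X + C 1 := by
    rw [reverse, natDegree_X_sub_C, reflect_sub, reflect_one_X, reflect_C]
    simp only [map_neg, map_one]
    ring
  rcases eq_or_ne r 0 with rfl | hr
  · rw [h]
    simp [nonzeroRoots, Multiset.filter_singleton]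
  · rw [h, nonzeroRoots, roots_C_mul_X_add_C _ (neg_ne_zero.2 hr)]
    simp [nonzeroRoots, Multiset.filter_singleton, hr, inv_neg]

theorem nonzeroRoots_reverse_of_roots_eq_zero {p : K[X]} (hp : p.roots = 0) :
    nonzeroRoots p.reverse = 0 := by
  rcases eq_or_ne p 0 with rfl | hp0
  · simp [nonzeroRoots]
  · refine Multiset.filter_eq_nil.2 fun r hr hr0 => ?_
    have : Invertible r⁻¹ := invertibleOfNonzero (inv_ne_zero hr0)
    have hroot : r⁻¹ ∈ p.roots := by
      rw [mem_roots hp0, IsRoot.def, eval, ← eval₂_reverse_eq_zero_iff, invOf_eq_inv, inv_inv]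
      exact (mem_roots'.1 hr).2
    simp [hp] at hroot

theorem nonzeroRoots_reverse (p : K[X]) :
    nonzeroRoots p.reverse = (nonzeroRoots p).map (·⁻¹) := by
  induction h : p.roots using Multiset.induction_on generalizing p with
  | empty => rw [nonzeroRoots_reverse_of_roots_eq_zero h, nonzeroRoots, h]; rfl
  | cons r s ih =>
    obtain ⟨hp, hr⟩ := mem_roots'.1 (h ▸ Multiset.mem_cons_self r s)
    obtain ⟨q, rfl⟩ := dvd_iff_isRoot.2 hr
    have hq : q.roots = s := by simpa [roots_mul hp] using h
    rw [reverse_mul_of_domain,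
      nonzeroRoots_mul (by rwa [← reverse_mul_of_domain, Ne, reverse_eq_zero]),
      nonzeroRoots_mul hp, nonzeroRoots_reverse_X_sub_C, ih q hq, Multiset.map_add]

theorem exists_eq_C_mul_X_pow_mul_prod_nonzeroRoots {p : R[X]} (hp : p.Splits) :
    ∃ k, p = C p.leadingCoeff * (X ^ k * ((nonzeroRoots p).map (X - C ·)).prod) := by
  refine ⟨p.roots.count 0, ?_⟩
  have h : (p.roots.filter (¬ · ≠ 0)).map (X - C ·) = .replicate (p.roots.count 0) X := by
    simp only [ne_eq, not_not, Multiset.filter_eq', Multiset.map_replicate, C_0, sub_zero]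
  conv_lhs => rw [hp.eq_prod_roots, ← Multiset.filter_add_not (· ≠ 0) p.roots, add_comm,
    Multiset.map_add, Multiset.prod_add, h, Multiset.prod_replicate]
  rw [nonzeroRoots]

theorem exists_X_pow_mul_eq_of_nonzeroRoots_eq {p q : K[X]} (hp : p.Splits) (hq : q.Splits)
    (hp0 : p ≠ 0) (h : nonzeroRoots p = nonzeroRoots q) :
    ∃ (c : K) (k l : ℕ), X ^ k * q = C c * (X ^ l * p) := by
  obtain ⟨k, hk⟩ := exists_eq_C_mul_X_pow_mul_prod_nonzeroRoots hp
  obtain ⟨l, hl⟩ := exists_eq_C_mul_X_pow_mul_prod_nonzeroRoots hq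
  obtain ⟨c, hc⟩ : ∃ c, q.leadingCoeff = c * p.leadingCoeff :=
    ⟨_, (div_mul_cancel₀ _ (leadingCoeff_ne_zero.2 hp0)).symm⟩
  refine ⟨c, k, l, ?_⟩
  calc X ^ k * q
      = X ^ k * (C c * C p.leadingCoeff * (X ^ l * ((nonzeroRoots p).map (X - C ·)).prod)) := by
        rw [h, ← C_mul, ← hc, ← hl]
    _ = C c * (X ^ l * (C p.leadingCoeff * (X ^ k * ((nonzeroRoots p).map (X - C ·)).prod))) := by
        ring
    _ = C c * (X ^ l * p) := by rw [← hk]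

end NonzeroRoots

theorem reflect_eq_X_pow_mul_reverse {R : Type*} [Semiring R] {N : ℕ} {p : R[X]}
    (hp : p.natDegree ≤ N) : reflect N p = X ^ (N - p.natDegree) * p.reverse := by
  conv_lhs => rw [← one_mul p, ← Nat.sub_add_cancel hp, reflect_mul 1 p (by simp) le_rfl,
    reflect_one]
  rfl

section ConjReflect

/-- The conjugate reciprocal `z ↦ z ^ N * conj (p (1 / conj z))` of a polynomial `p` of degree at
most `N`: its `i`-th coefficient is the conjugate of the `(N - i)`-th coefficient of `p`. -/
noncomputable def conjReflect {R : Type*} [CommSemiring R] [StarRing R] (N : ℕ) (p : R[X]) : R[X] :=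
  reflect N (p.map (starRingEnd R))

section CommSemiring

variable {R : Type*} [CommSemiring R] [StarRing R] {N : ℕ} {p q : R[X]}

theorem coeff_conjReflect (N : ℕ) (p : R[X]) (i : ℕ) :
    (conjReflect N p).coeff i = starRingEnd R (p.coeff (revAt N i)) := by
  rw [conjReflect, coeff_reflect, coeff_map]

theorem conjReflect_conjReflect (N : ℕ) (p : R[X]) : conjReflect N (conjReflect N p) = p := by
  ext i
  simp [coeff_conjReflect]

theorem natDegree_conjReflect_le (hp : p.natDegree ≤ N) : (conjReflect N p).natDegree ≤ N :=
  natDegree_reflect_le.trans (max_le le_rfl (natDegree_map_le.trans hp))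

theorem conjReflect_mul {M : ℕ} (hp : p.natDegree ≤ M) (hq : q.natDegree ≤ N) :
    conjReflect (M + N) (p * q) = conjReflect M p * conjReflect N q := by
  simp only [conjReflect, Polynomial.map_mul]
  exact reflect_mul _ _ (natDegree_map_le.trans hp) (natDegree_map_le.trans hq)

theorem conjReflect_mul_conjReflect_self (hp : p.natDegree ≤ N) :
    conjReflect (N + N) (p * conjReflect N p) = p * conjReflect N p := by
  rw [conjReflect_mul hp (natDegree_conjReflect_le hp), conjReflect_conjReflect, mul_comm]

theorem coeff_mul_conjReflect_self (p : R[X]) {m : ℕ} (hm : m ≤ N) :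
    (p * conjReflect N p).coeff (N - m) =
      ∑ i ∈ Finset.range (N - m + 1), p.coeff i * starRingEnd R (p.coeff (i + m)) := by
  rw [coeff_mul, Finset.Nat.sum_antidiagonal_eq_sum_range_succ_mk]
  refine Finset.sum_congr rfl fun i hi => ?_
  rw [Finset.mem_range] at hi
  rw [coeff_conjReflect, revAt_le (by omega), show N - (N - m - i) = i + m by omega]

theorem eq_of_conjReflect_eq_self_of_coeff_eq (hp : p.natDegree ≤ N + N)
    (hq : q.natDegree ≤ N + N) (hp' : conjReflect (N + N) p = p)
    (hq' : conjReflect (N + N) q = q) (h : ∀ i ≤ N, p.coeff i = q.coeff i) : p = q := by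
  refine (ext_iff_natDegree_le hp hq).2 fun i hi => ?_
  rcases le_total i N with hiN | hiN
  · exact h i hiN
  · rw [← hp', ← hq', coeff_conjReflect, coeff_conjReflect, revAt_le hi, h _ (by omega)]

end CommSemiring

variable {K : Type*} [Field K] [StarRing K]

/-- The point `1 / conj z`; over `ℂ`, the reflection of `z` in the unit circle. -/
def conjInv (z : K) : K :=
  (starRingEnd K z)⁻¹

theorem conjInv_involutive : Function.Involutive (conjInv : K → K) := fun z => by
  simp [conjInv]

variable [DecidableEq K]

theorem nonzeroRoots_conjReflect {N : ℕ} {p : K[X]} (hp : p.Splits) (hN : p.natDegree ≤ N) :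
    nonzeroRoots (conjReflect N p) = (nonzeroRoots p).map conjInv := by
  rw [conjReflect, reflect_eq_X_pow_mul_reverse (natDegree_map_le.trans hN),
    nonzeroRoots_X_pow_mul, nonzeroRoots_reverse, nonzeroRoots_map (starRingEnd K).injective hp,
    Multiset.map_map]
  rfl

theorem nonzeroRoots_mul_conjReflect_self {N : ℕ} {p : K[X]} (hp : p.Splits)
    (hN : p.natDegree ≤ N) :
    nonzeroRoots (p * conjReflect N p) = nonzeroRoots p + (nonzeroRoots p).map conjInv := by
  rcases eq_or_ne p 0 with rfl | hp0
  · simp [nonzeroRoots]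
  · have : conjReflect N p ≠ 0 := by simpa [conjReflect, Polynomial.map_eq_zero] using hp0
    rw [nonzeroRoots_mul (mul_ne_zero hp0 this), nonzeroRoots_conjReflect hp hN]

end ConjReflect

section Signal

variable {n : ℕ} {x y : Fin n → ℂ}

theorem extZ_of_neg (x : Fin n → ℂ) {i : ℤ} (hi : i < 0) : extZ x i = 0 :=
  dif_neg (by omega)

theorem extZ_of_le (x : Fin n → ℂ) {i : ℤ} (hi : n ≤ i) : extZ x i = 0 :=
  dif_neg (by omega)

theorem extZ_fin (x : Fin n → ℂ) (i : Fin n) : extZ x (i : ℕ) = x i :=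
  dif_pos (by omega)

theorem coeff_ofFn (x : Fin n → ℂ) (i : ℕ) : (ofFn n x).coeff i = extZ x i := by
  rcases lt_or_ge i n with hi | hi
  · rw [ofFn_coeff_eq_val_of_lt x hi, ← extZ_fin x ⟨i, hi⟩]
  · rw [ofFn_coeff_eq_zero_of_ge x hi, extZ_of_le x (by exact_mod_cast hi)]

theorem coeff_X_pow_mul_ofFn (x : Fin n → ℂ) (k i : ℕ) :
    (X ^ k * ofFn n x).coeff i = extZ x (i - k) := by
  rw [coeff_X_pow_mul']
  split_ifs with h
  · rw [coeff_ofFn, Nat.cast_sub h]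
  · rw [extZ_of_neg x (by omega)]

theorem natDegree_ofFn_le (x : Fin n → ℂ) : (ofFn n x).natDegree ≤ n :=
  natDegree_le_of_degree_le (ofFn_degree_lt x).le

theorem autocorr_of_le (x : Fin n → ℂ) {m : ℕ} (hm : n ≤ m) : autocorr x m = 0 := by
  simp [autocorr, Nat.sub_eq_zero_of_le hm]

theorem autocorr_eq_of_forall_fin (h : ∀ m : Fin n, autocorr x m = autocorr y m) (m : ℕ) :
    autocorr x m = autocorr y m := by
  rcases lt_or_ge m n with hm | hm
  · exact h ⟨m, hm⟩
  · rw [autocorr_of_le x hm, autocorr_of_le y hm]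

-- Reflecting at `n`, not at `n - 1`, adds a zero coefficient and avoids truncated subtraction.
theorem coeff_ofFn_mul_conjReflect (x : Fin n → ℂ) {m : ℕ} (hm : m ≤ n) :
    (ofFn n x * conjReflect n (ofFn n x)).coeff (n - m) = autocorr x m := by
  rw [coeff_mul_conjReflect_self _ hm, Finset.sum_range_succ, Nat.sub_add_cancel hm,
    ofFn_coeff_eq_zero_of_ge x le_rfl, map_zero, mul_zero, add_zero, autocorr]
  simp only [coeff_ofFn, Nat.cast_add]

theorem ofFn_mul_conjReflect_eq_of_autocorr_eq (h : ∀ m : Fin n, autocorr x m = autocorr y m) :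
    ofFn n x * conjReflect n (ofFn n x) = ofFn n y * conjReflect n (ofFn n y) := by
  have hdeg (z : Fin n → ℂ) := natDegree_mul_le_of_le (natDegree_ofFn_le z)
    (natDegree_conjReflect_le (natDegree_ofFn_le z))
  refine eq_of_conjReflect_eq_self_of_coeff_eq (hdeg x) (hdeg y)
    (conjReflect_mul_conjReflect_self (natDegree_ofFn_le x))
    (conjReflect_mul_conjReflect_self (natDegree_ofFn_le y)) fun i hi => ?_
  rw [← Nat.sub_sub_self hi, coeff_ofFn_mul_conjReflect x (n.sub_le i),
    coeff_ofFn_mul_conjReflect y (n.sub_le i), autocorr_eq_of_forall_fin h]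

theorem nonzeroRoots_add_map_conjInv_eq_of_autocorr_eq
    (h : ∀ m : Fin n, autocorr x m = autocorr y m) :
    nonzeroRoots (ofFn n x) + (nonzeroRoots (ofFn n x)).map conjInv =
      nonzeroRoots (ofFn n y) + (nonzeroRoots (ofFn n y)).map conjInv := by
  rw [← nonzeroRoots_mul_conjReflect_self (IsAlgClosed.splits _) (natDegree_ofFn_le x),
    ← nonzeroRoots_mul_conjReflect_self (IsAlgClosed.splits _) (natDegree_ofFn_le y),
    ofFn_mul_conjReflect_eq_of_autocorr_eq h]

theorem autocorr_zero (x : Fin n → ℂ) : autocorr x 0 = (∑ i, ‖x i‖ ^ 2 : ℝ) := by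
  simp [autocorr, Finset.sum_range, extZ_fin, Complex.mul_conj']

theorem autocorr_zero_eq_zero_iff : autocorr x 0 = 0 ↔ x = 0 := by
  rw [autocorr_zero, Complex.ofReal_eq_zero,
    Finset.sum_eq_zero_iff_of_nonneg fun _ _ => by positivity]
  simp [funext_iff]

theorem tsum_norm_extZ_sq (x : Fin n → ℂ) : ∑' j, ‖extZ x j‖ ^ 2 = ∑ i, ‖x i‖ ^ 2 := by
  have hinj : Function.Injective fun i : Fin n => (i : ℤ) :=
    Nat.cast_injective.comp Fin.val_injective
  rw [← hinj.tsum_eq, tsum_fintype]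
  · simp only [extZ_fin]
  · intro j hj
    by_contra hrange
    refine hj ?_
    rcases lt_or_ge j 0 with h0 | h0
    · simp [extZ_of_neg x h0]
    · lift j to ℕ using h0
      have : n ≤ j := not_lt.1 fun hjn => hrange ⟨⟨j, hjn⟩, rfl⟩
      simp [extZ_of_le x (Nat.cast_le.2 this)]

theorem autocorr_zero_eq_of_extZ_eq_const_mul_shift {c : ℂ} {m : ℤ}
    (h : ∀ j, extZ y j = c * extZ x (j - m)) : autocorr y 0 = ‖c‖ ^ 2 * autocorr x 0 := by
  have : ∑' j, ‖extZ y j‖ ^ 2 = ‖c‖ ^ 2 * ∑' j, ‖extZ x j‖ ^ 2 := by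
    simp_rw [h, norm_mul, mul_pow, tsum_mul_left]
    exact congr_arg _ ((Equiv.subRight m).tsum_eq fun j => ‖extZ x j‖ ^ 2)
  rw [autocorr_zero, autocorr_zero, ← tsum_norm_extZ_sq, ← tsum_norm_extZ_sq, this]
  push_cast
  rfl

theorem extZ_eq_const_mul_shift_of_X_pow_mul_ofFn_eq {c : ℂ} {k l : ℕ}
    (h : X ^ k * ofFn n y = C c * (X ^ l * ofFn n x)) (j : ℤ) :
    extZ y j = c * extZ x (j - (l - k)) := by
  rcases lt_or_ge (j + k) 0 with hj | hj
  · rw [extZ_of_neg y (by omega), extZ_of_neg x (by omega), mul_zero]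
  · obtain ⟨i, hi⟩ := Int.eq_ofNat_of_zero_le hj
    have hcoeff := congr_arg (coeff · i) h
    simp only [coeff_C_mul, coeff_X_pow_mul_ofFn] at hcoeff
    convert hcoeff using 3 <;> omega

theorem equivSig_refl (x : Fin n → ℂ) : equivSig x x :=
  ⟨1, 0, by simp⟩

theorem equivSig_of_nonzeroRoots_eq (h0 : autocorr x 0 = autocorr y 0)
    (h : nonzeroRoots (ofFn n x) = nonzeroRoots (ofFn n y)) : equivSig x y := by
  rcases eq_or_ne x 0 with rfl | hx
  · have hy : y = 0 := by rw [← autocorr_zero_eq_zero_iff, ← h0, autocorr_zero_eq_zero_iff]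
    exact hy.symm ▸ equivSig_refl 0
  · have hp : ofFn n x ≠ 0 := (map_ne_zero_iff _ (injective_ofFn n)).2 hx
    obtain ⟨c, k, l, hc⟩ := exists_X_pow_mul_eq_of_nonzeroRoots_eq
      (IsAlgClosed.splits _) (IsAlgClosed.splits _) hp h
    have hshift := extZ_eq_const_mul_shift_of_X_pow_mul_ofFn_eq hc
    have hnorm : (‖c‖ : ℂ) ^ 2 = 1 := by
      refine (mul_eq_right₀ (autocorr_zero_eq_zero_iff.not.2 hx)).1 ?_
      rw [← autocorr_zero_eq_of_extZ_eq_const_mul_shift hshift, h0]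
    refine ⟨c, l - k, ?_, .inl hshift⟩
    exact (pow_eq_one_iff_of_nonneg (norm_nonneg c) two_ne_zero).1 (by exact_mod_cast hnorm)

theorem exists_finset_card_le_two_pow_card_nonzeroRoots (x₀ : Fin n → ℂ) :
    ∃ S : Finset (Fin n → ℂ), S.card ≤ 2 ^ (nonzeroRoots (ofFn n x₀)).card ∧
      ∀ x : Fin n → ℂ, (∀ m : Fin n, autocorr x m = autocorr x₀ m) → ∃ y ∈ S, equivSig x y := by
  let P : Set (Fin n → ℂ) := {x | ∀ m : Fin n, autocorr x m = autocorr x₀ m}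
  let roots : (Fin n → ℂ) → Multiset ℂ := fun x => nonzeroRoots (ofFn n x)
  let pick : Multiset ℂ × Multiset ℂ → (Fin n → ℂ) := fun AB =>
    Function.invFunOn roots P (AB.1 + AB.2.map conjInv)
  refine ⟨((roots x₀).antidiagonal.map pick).toFinset, ?_, fun x hx => ?_⟩
  · exact (Multiset.toFinset_card_le _).trans (by simp [roots])
  · obtain ⟨A, B, hAB, hx'⟩ := exists_add_eq_and_add_map_eq conjInv_involutive
      (nonzeroRoots_add_map_conjInv_eq_of_autocorr_eq hx)
    have hfiber : ∃ z ∈ P, roots z = A + B.map conjInv := ⟨x, hx, hx'.symm⟩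
    refine ⟨pick (A, B), ?_, ?_⟩
    · exact Multiset.mem_toFinset.2 (Multiset.mem_map_of_mem _ (Multiset.mem_antidiagonal.2 hAB))
    · have hpick : ∀ m : Fin n, autocorr x m = autocorr (pick (A, B)) m :=
        fun m => (hx m).trans (Function.invFunOn_mem hfiber m).symm
      exact equivSig_of_nonzeroRoots_eq (autocorr_eq_of_forall_fin hpick 0)
        (hx'.symm.trans (Function.invFunOn_eq hfiber).symm)

end Signal

/-- If `a ∈ ℂⁿ` is the autocorrelation of some signal `x₀ ∈ ℂⁿ`, then there is a set `S` of
at most `2ⁿ` signals such that every signal with autocorrelation `a` is equivalent (up to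
time-shift, conjugate-flip and global phase) to a member of `S`. -/
theorem autocorrelation_at_most_two_pow_solutions
    (n : ℕ) (hn : 1 ≤ n) (a : Fin n → ℂ) (x₀ : Fin n → ℂ)
    (ha : ∀ m : Fin n, autocorr x₀ (m : ℕ) = a m) :
    ∃ S : Finset (Fin n → ℂ), S.card ≤ 2 ^ n ∧
      ∀ x : Fin n → ℂ, (∀ m : Fin n, autocorr x (m : ℕ) = a m) →
        ∃ y ∈ S, equivSig x y := by
  obtain ⟨S, hcard, hS⟩ := exists_finset_card_le_two_pow_card_nonzeroRoots x₀
  have hroots : (nonzeroRoots (ofFn n x₀)).card ≤ n :=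
    (card_nonzeroRoots_le_natDegree _).trans (natDegree_ofFn_le x₀)
  exact ⟨S, hcard.trans (Nat.pow_le_pow_right two_pos hroots),
    fun x hx => hS x fun m => (hx m).trans (ha m).symm⟩
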